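/- Let G be a finitely generated group with finite generating set X whose growth function g_G^X(n) is bounded above by a polynomial in n. Then for every polynomial t(n) there exists a context-free language (namely the word problem W(F₂) of the free group of rank 2) that is not recognized by any weakly t(n) time-bounded G-automaton; that is, CF is not contained in 𝔏(G)^w_{t(n)}. -/

import Mathlib

/-- A `G`-automaton over input alphabet `α`: a nondeterministic finite automaton
equipped with a register holding an element of the group `G`. -/
structure GAutomaton (α : Type*) (G : Type*) [Group G] where
  /-- the (finite) state set -/
  Q : Type
  finQ : Finite Q
  /-- the initial state -/
  q0 : Q
  /-- the accepting states -/
  acc : Set Q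
  /-- the (finite) transition relation; `none` stands for ε -/
  δ : Set (Q × Option α × Q × G)
  finδ : δ.Finite

namespace GAutomaton

variable {α : Type*} {G : Type*} [Group G]

/-- One computation step between configurations `(state, register, remaining input)`. -/
def Step (M : GAutomaton α G) (c c' : M.Q × G × List α) : Prop :=
  ∃ σ m, (c.1, σ, c'.1, m) ∈ M.δ ∧ c'.2.1 = c.2.1 * m ∧
    match σ with
    | none => c'.2.2 = c.2.2
    | some s => c.2.2 = s :: c'.2.2

/-- `M.StepsIn k c c'` : configuration `c'` is reachable from `c` in exactly `k` steps. -/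
def StepsIn (M : GAutomaton α G) : ℕ → (M.Q × G × List α) → (M.Q × G × List α) → Prop
  | 0, c, c' => c = c'
  | n + 1, c, c' => ∃ d, M.Step c d ∧ M.StepsIn n d c'

/-- `M` accepts the word `w` within `t` computation steps. -/
def AcceptsIn (M : GAutomaton α G) (w : List α) (t : ℕ) : Prop :=
  ∃ k ≤ t, ∃ q ∈ M.acc, M.StepsIn k (M.q0, 1, w) (q, 1, [])

/-- The language recognized by `M`. -/
def lang (M : GAutomaton α G) : Language α := {w | ∃ t, M.AcceptsIn w t}

/-- `M` is real-time if every transition consumes an input symbol. -/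
def RealTime (M : GAutomaton α G) : Prop := ∀ tr ∈ M.δ, tr.2.1 ≠ none

end GAutomaton

/-- `L ∈ 𝔏(G)` : the language `L` is recognized by some `G`-automaton. -/
def GRecognizable (G : Type*) [Group G] {α : Type*} (L : Language α) : Prop :=
  ∃ M : GAutomaton α G, M.lang = L

/-- `L ∈ 𝔏(G)ʷ_{t(n)}` : `L` is recognized by a weakly `t(n)` time-bounded `G`-automaton. -/
def GRecognizableInTime (G : Type*) [Group G] {α : Type*} (L : Language α) (t : ℕ → ℕ) : Prop :=
  ∃ M : GAutomaton α G, M.lang = L ∧ ∀ w ∈ L, M.AcceptsIn w (t w.length)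

/-- `L ∈ 𝔏(G)ʷ_{O(n)}` : `L` is recognized by a weakly linear-time bounded `G`-automaton. -/
def GRecognizableLinTime (G : Type*) [Group G] {α : Type*} (L : Language α) : Prop :=
  ∃ C : ℕ, GRecognizableInTime G L (fun n => C * n + C)

/-- Evaluation in `G` of a word over the alphabet `X ∪ X⁻¹`, encoded as `↥X × Bool`
(`(x, false)` stands for the generator `x` and `(x, true)` for its inverse `x⁻¹`). -/
def wordEval {G : Type*} [Group G] (X : Finset G) (w : List (↥X × Bool)) : G :=
  (w.map fun p => if p.2 then (p.1 : G)⁻¹ else (p.1 : G)).prod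

/-- The word problem language `W(G,X)` over the alphabet `X ∪ X⁻¹`: all words whose
product in `G` is the identity. -/
def wordProblem {G : Type*} [Group G] (X : Finset G) : Language (↥X × Bool) :=
  {w | wordEval X w = 1}

/-- The growth function `g_G^X(n)` of `G` with respect to `X`: the number of group
elements of word length at most `n`. -/
noncomputable def growthFn {G : Type*} [Group G] (X : Finset G) (n : ℕ) : ℕ :=
  Nat.card {g : G // ∃ w : List (↥X × Bool), w.length ≤ n ∧ wordEval X w = g}

/-- The word problem `W(F₂)` of the free group of rank 2, over the four-letter alphabet
`Fin 2 × Bool` of the two generators and their inverses. -/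
def wordProblemF2 : Language (Fin 2 × Bool) :=
  {w | (w.map fun p =>
    if p.2 then (FreeGroup.of p.1)⁻¹ else FreeGroup.of p.1).prod = 1}

/-- The value in `F₂` of a letter of the alphabet of `wordProblemF2`. -/
def letterF2 (p : Fin 2 × Bool) : FreeGroup (Fin 2) :=
  if p.2 then (FreeGroup.of p.1)⁻¹ else FreeGroup.of p.1

/-- The formal inverse of a letter. -/
def flipLetter (p : Fin 2 × Bool) : Fin 2 × Bool := (p.1, !p.2)

lemma mem_wordProblemF2 {w : List (Fin 2 × Bool)} :
    w ∈ wordProblemF2 ↔ (w.map letterF2).prod = 1 := Iff.rfl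

lemma letterF2_flipLetter (p : Fin 2 × Bool) : letterF2 (flipLetter p) = (letterF2 p)⁻¹ := by
  rcases p with ⟨i, _ | _⟩ <;> simp [letterF2, flipLetter]

lemma flipLetter_flipLetter (p : Fin 2 × Bool) : flipLetter (flipLetter p) = p := by
  simp [flipLetter]

/-- `letterF2` uses `true` for inverses, whereas `FreeGroup.mk` uses `false`. -/
lemma prod_map_letterF2 (w : List (Fin 2 × Bool)) :
    (w.map letterF2).prod = FreeGroup.mk (w.map flipLetter) := by
  induction w with
  | nil => rfl
  | cons a w ih =>
    rw [List.map_cons, List.prod_cons, ih, List.map_cons, ← List.singleton_append,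
      ← FreeGroup.mul_mk]
    rcases a with ⟨i, _ | _⟩ <;> simp [letterF2, flipLetter, FreeGroup.of, FreeGroup.invRev]

/-! ### A context-free grammar for the word problem of `F₂` -/

/-- The unique nonterminal `S`. -/
abbrev symbS : Symbol (Fin 2 × Bool) Unit := Symbol.nonterminal ()

open Classical in
/-- The rules `S → ε` and `S → S x S x⁻¹ S` for every letter `x`. -/
noncomputable def rulesF2 : Finset (ContextFreeRule (Fin 2 × Bool) Unit) :=
  insert ⟨(), []⟩ (Finset.univ.image fun x : Fin 2 × Bool =>
    ⟨(), [symbS, .terminal x, symbS, .terminal (flipLetter x), symbS]⟩)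

/-- A grammar generating the word problem of `F₂`. -/
noncomputable abbrev grammarF2 : ContextFreeGrammar (Fin 2 × Bool) where
  NT := Unit
  initial := ()
  rules := rulesF2

lemma grammarF2_produces_nil (p q : List (Symbol (Fin 2 × Bool) Unit)) :
    grammarF2.Produces (p ++ symbS :: q) (p ++ q) :=
  ⟨⟨(), []⟩, by simp [rulesF2], by
    simpa using ContextFreeRule.rewrites_of_exists_parts (T := Fin 2 × Bool) ⟨(), []⟩ p q⟩

lemma grammarF2_produces_pair (x : Fin 2 × Bool) (p q : List (Symbol (Fin 2 × Bool) Unit)) :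
    grammarF2.Produces (p ++ symbS :: q)
      (p ++ symbS :: .terminal x :: symbS :: .terminal (flipLetter x) :: symbS :: q) :=
  ⟨⟨(), [symbS, .terminal x, symbS, .terminal (flipLetter x), symbS]⟩, by simp [rulesF2], by
    simpa using ContextFreeRule.rewrites_of_exists_parts (T := Fin 2 × Bool)
      ⟨(), [symbS, .terminal x, symbS, .terminal (flipLetter x), symbS]⟩ p q⟩

/-- The value of a symbol in `F₂`, the nonterminal having value `1`. -/
def symbolF2 : Symbol (Fin 2 × Bool) Unit → FreeGroup (Fin 2)
  | .terminal x => letterF2 x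
  | .nonterminal _ => 1

lemma grammarF2_produces_prod {u v : List (Symbol (Fin 2 × Bool) Unit)}
    (h : grammarF2.Produces u v) : (u.map symbolF2).prod = (v.map symbolF2).prod := by
  obtain ⟨r, hr, hrw⟩ := h
  obtain ⟨p, q, rfl, rfl⟩ := hrw.exists_parts
  have hout : (r.output.map symbolF2).prod = 1 := by
    simp only [rulesF2, Finset.mem_insert, Finset.mem_image, Finset.mem_univ, true_and] at hr
    rcases hr with rfl | ⟨x, rfl⟩
    · rfl
    · simp [symbolF2, letterF2_flipLetter]
  simp only [List.map_append, List.prod_append, hout]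
  simp [symbolF2]

lemma grammarF2_derives_prod {u v : List (Symbol (Fin 2 × Bool) Unit)}
    (h : grammarF2.Derives u v) : (u.map symbolF2).prod = (v.map symbolF2).prod := by
  induction h with
  | refl => rfl
  | tail _ h ih => exact ih.trans (grammarF2_produces_prod h)

/-- The sentential form `S a₁ S a₂ ⋯ S aₙ`. -/
def interleaveS (w : List (Fin 2 × Bool)) : List (Symbol (Fin 2 × Bool) Unit) :=
  w.flatMap fun a => [symbS, .terminal a]

lemma grammarF2_derives_of_red {w : List (Fin 2 × Bool)} (h : FreeGroup.Red w []) :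
    grammarF2.Derives [symbS] (interleaveS (w.map flipLetter) ++ [symbS]) := by
  induction h using Relation.ReflTransGen.head_induction_on with
  | refl => exact ContextFreeGrammar.Derives.refl _
  | head hstep _ ih =>
    rename_i w w'
    refine ih.tail ?_
    cases hstep with
    | @not L₁ L₂ x b =>
      obtain ⟨q, hq⟩ : ∃ q, interleaveS (L₂.map flipLetter) ++ [symbS] = symbS :: q := by
        cases L₂ with
        | nil => exact ⟨[], rfl⟩
        | cons a L => exact ⟨_, rfl⟩
      have := grammarF2_produces_pair (flipLetter (x, b)) (interleaveS (L₁.map flipLetter)) q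
      rw [← hq] at this
      simpa [interleaveS, flipLetter] using this

lemma grammarF2_derives_erase (w : List (Fin 2 × Bool)) :
    grammarF2.Derives (interleaveS w ++ [symbS]) (w.map Symbol.terminal) := by
  induction w with
  | nil => exact .single (grammarF2_produces_nil [] [])
  | cons a w ih =>
    exact .head (grammarF2_produces_nil [] (.terminal a :: (interleaveS w ++ [symbS])))
      (ih.append_left [.terminal a])

lemma red_nil_of_mk_eq_one {w : List (Fin 2 × Bool)} (h : FreeGroup.mk w = 1) :
    FreeGroup.Red w [] := by
  obtain ⟨c, hc, hn⟩ := FreeGroup.Red.exact.1 (h.trans FreeGroup.one_eq_mk)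
  rwa [FreeGroup.Red.nil_iff.1 hn] at hc

theorem wordProblemF2_isContextFree : wordProblemF2.IsContextFree := by
  refine ⟨grammarF2, Set.ext fun w => ⟨fun h => ?_, fun h => ?_⟩⟩
  · have := grammarF2_derives_prod h
    rw [List.map_map] at this
    exact this.symm
  · have hred := red_nil_of_mk_eq_one ((prod_map_letterF2 w).symm.trans h)
    have hder := grammarF2_derives_of_red hred
    rw [List.map_map, show flipLetter ∘ flipLetter = id from funext flipLetter_flipLetter,
      List.map_id] at hder
    exact hder.trans (grammarF2_derives_erase w)

/-! ### Positive words of the free group -/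

lemma prod_map_of_injective :
    Function.Injective fun l : List (Fin 2) => (l.map FreeGroup.of).prod := by
  have key : ∀ l : List (Fin 2), (l.map FreeGroup.of).prod = FreeGroup.mk (l.map (·, true)) := by
    intro l
    induction l with
    | nil => rfl
    | cons a l ih => simp [ih, FreeGroup.of]
  have hred : ∀ l : List (Fin 2), FreeGroup.IsReduced (l.map (·, true)) := by
    intro l
    induction l with
    | nil => simp
    | cons a l ih => cases l <;> simp_all [FreeGroup.isReduced_cons_cons]
  intro l l' h
  simp only [key] at h
  obtain ⟨c, hc, hc'⟩ := FreeGroup.Red.exact.1 h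
  have := ((hred l).red_iff_eq.1 hc).symm.trans ((hred l').red_iff_eq.1 hc')
  exact List.map_injective_iff.2 (fun a b hab => congrArg Prod.fst hab) this

lemma append_mem_wordProblemF2_iff (u v : List (Fin 2)) :
    u.map (·, false) ++ (v.map (·, true)).reverse ∈ wordProblemF2 ↔ u = v := by
  have hv : ((v.map (·, true)).reverse.map letterF2).prod = ((v.map FreeGroup.of).prod)⁻¹ := by
    induction v with
    | nil => simp
    | cons a v ih => simp_all [letterF2]
  have hu : ((u.map (·, false)).map letterF2).prod = (u.map FreeGroup.of).prod := by
    rw [List.map_map]; rfl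
  rw [mem_wordProblemF2, List.map_append, List.prod_append, hu, hv, mul_inv_eq_one]
  exact prod_map_of_injective.eq_iff

/-! ### Word length in a finitely generated group -/

section WordLength

variable {G : Type*} [Group G] (X : Finset G)

/-- The elements of word length at most `n`. -/
def wordBall (n : ℕ) : Set G := {g | ∃ w : List (↥X × Bool), w.length ≤ n ∧ wordEval X w = g}

variable {X}

lemma wordBall_mono : Monotone (wordBall X) :=
  fun _ _ h _ ⟨w, hw, e⟩ => ⟨w, hw.trans h, e⟩

lemma one_mem_wordBall (n : ℕ) : (1 : G) ∈ wordBall X n := ⟨[], by simp, rfl⟩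

lemma mul_mem_wordBall {m n : ℕ} {g h : G} (hg : g ∈ wordBall X m) (hh : h ∈ wordBall X n) :
    g * h ∈ wordBall X (m + n) := by
  obtain ⟨w, hw, rfl⟩ := hg
  obtain ⟨w', hw', rfl⟩ := hh
  exact ⟨w ++ w', by simp only [List.length_append]; omega, by simp [wordEval]⟩

lemma inv_mem_wordBall {n : ℕ} {g : G} (hg : g ∈ wordBall X n) : g⁻¹ ∈ wordBall X n := by
  obtain ⟨w, hw, rfl⟩ := hg
  refine ⟨(w.map fun p => (p.1, !p.2)).reverse, by simpa using hw, ?_⟩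
  clear hw
  induction w with
  | nil => simp [wordEval]
  | cons a w ih =>
    rcases a with ⟨x, _ | _⟩ <;> simp_all [wordEval]

lemma finite_wordBall (n : ℕ) : (wordBall X n).Finite :=
  ((List.finite_length_le (↥X × Bool) n).image (wordEval X)).subset
    fun _ ⟨w, hw, e⟩ => ⟨w, hw, e⟩

lemma exists_mem_wordBall (hX : Subgroup.closure (X : Set G) = ⊤) (g : G) :
    ∃ n, g ∈ wordBall X n := by
  have hg : g ∈ Subgroup.closure (X : Set G) := hX ▸ Subgroup.mem_top g
  induction hg using Subgroup.closure_induction with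
  | mem x hx => exact ⟨1, [(⟨x, hx⟩, false)], by simp, by simp [wordEval]⟩
  | one => exact ⟨0, one_mem_wordBall 0⟩
  | mul x y _ _ hx hy =>
    obtain ⟨m, hm⟩ := hx
    obtain ⟨n, hn⟩ := hy
    exact ⟨m + n, mul_mem_wordBall hm hn⟩
  | inv x _ hx =>
    obtain ⟨n, hn⟩ := hx
    exact ⟨n, inv_mem_wordBall hn⟩

lemma exists_subset_wordBall (hX : Subgroup.closure (X : Set G) = ⊤) {S : Set G}
    (hS : S.Finite) : ∃ C, S ⊆ wordBall X C := by
  choose f hf using exists_mem_wordBall hX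
  obtain ⟨C, hC⟩ := (hS.image f).bddAbove
  exact ⟨C, fun g hg => wordBall_mono (hC ⟨g, hg, rfl⟩) (hf g)⟩

end WordLength

/-! ### Splitting and recombining computations -/

namespace GAutomaton

variable {α : Type*} {G : Type*} [Group G] {M : GAutomaton α G}

lemma StepsIn.trans {i j : ℕ} {c d e : M.Q × G × List α}
    (h : M.StepsIn i c d) (h' : M.StepsIn j d e) : M.StepsIn (i + j) c e := by
  induction i generalizing c with
  | zero => obtain rfl : c = d := h; simpa using h'
  | succ i ih =>
    obtain ⟨c', hs, hc'⟩ := h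
    rw [Nat.succ_add]
    exact ⟨c', hs, ih hc'⟩

/-- A computation reading all of `u ++ v` passes through a configuration with remaining input
`v`; the part before it works for every continuation of `u`, and its effect on the register is
bounded by the number of steps. -/
lemma StepsIn.exists_split {X : Finset G} {C : ℕ}
    (hC : ∀ tr ∈ M.δ, tr.2.2.2 ∈ wordBall X C) {k : ℕ} {q q' : M.Q} {g g' : G}
    {u v : List α} (h : M.StepsIn k (q, g, u ++ v) (q', g', [])) :
    ∃ (p : M.Q) (m : G), m ∈ wordBall X (C * k) ∧
      (∃ i, ∀ v', M.StepsIn i (q, g, u ++ v') (p, g * m, v')) ∧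
      ∃ j, M.StepsIn j (p, g * m, v) (q', g', []) := by
  induction k generalizing q g u with
  | zero =>
    have h' : (q, g, u ++ v) = (q', g', []) := h
    obtain ⟨rfl, rfl⟩ : u = [] ∧ v = [] := by simp_all
    exact ⟨q, 1, one_mem_wordBall _, ⟨0, fun _ => by simp [StepsIn]⟩, 0,
      by simpa [StepsIn] using h'⟩
  | succ k ih =>
    rcases u with _ | ⟨a, u⟩
    · exact ⟨q, 1, one_mem_wordBall _, ⟨0, fun _ => by simp [StepsIn]⟩, k + 1, by simpa using h⟩
    obtain ⟨⟨r, x, y⟩, ⟨σ, m, hδ, hx, hσ⟩, hrest⟩ := h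
    dsimp only at hδ hx hσ
    subst hx
    have hm := hC _ hδ
    have key : ∀ u' : List α, y = u' ++ v →
        (∀ v', M.Step (q, g, a :: u ++ v') (r, g * m, u' ++ v')) →
        ∃ (p : M.Q) (m : G), m ∈ wordBall X (C * (k + 1)) ∧
          (∃ i, ∀ v', M.StepsIn i (q, g, a :: u ++ v') (p, g * m, v')) ∧
          ∃ j, M.StepsIn j (p, g * m, v) (q', g', []) := by
      rintro u' rfl hstep
      obtain ⟨p, m', hm', ⟨i, hi⟩, j, hj⟩ := ih hrest
      refine ⟨p, m * m', ?_, ⟨i + 1, fun v' => ⟨_, hstep v', ?_⟩⟩, j, ?_⟩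
      · rw [Nat.mul_succ, add_comm]
        exact mul_mem_wordBall hm hm'
      · rw [← mul_assoc]
        exact hi v'
      · rwa [← mul_assoc]
    cases σ with
    | none => exact key (a :: u) hσ fun v' => ⟨none, m, hδ, rfl, rfl⟩
    | some s =>
      obtain ⟨rfl, hy⟩ : a = s ∧ u ++ v = y := by simpa using hσ
      exact key u hy.symm fun v' => ⟨some a, m, hδ, rfl, rfl⟩

end GAutomaton

/-! ### Polynomials are eventually dominated by `2 ^ n` -/

lemma exists_eval_lt_two_pow (P : Polynomial ℕ) : ∃ n : ℕ, P.eval n < 2 ^ n := by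
  have ho : (fun n : ℕ => ((P.eval n : ℕ) : ℝ)) =o[Filter.atTop] fun n : ℕ => (2 : ℝ) ^ n := by
    induction P using Polynomial.induction_on' with
    | add p q hp hq => simpa using hp.add hq
    | monomial k a =>
      simpa using (isLittleO_pow_const_const_pow_of_one_lt (R := ℝ) k one_lt_two).const_mul_left
        (a : ℝ)
  obtain ⟨n, hn⟩ := (ho.bound (one_half_pos (α := ℝ))).exists
  refine ⟨n, ?_⟩
  have h2 : (0 : ℝ) < 2 ^ n := by positivity
  rw [Real.norm_of_nonneg (Nat.cast_nonneg _), Real.norm_of_nonneg h2.le] at hn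
  have : ((P.eval n : ℕ) : ℝ) < 2 ^ n := by linarith
  exact_mod_cast this

/-- If a `G`-automaton recognizes `W(F₂)` in time `t`, then the `2 ^ n` positive words of length `n`
lead to pairwise distinct pairs of a state and a register value. -/
lemma two_pow_le_card_mul_growthFn {G : Type*} [Group G] {X : Finset G}
    {M : GAutomaton (Fin 2 × Bool) G} {C : ℕ} (hC : ∀ tr ∈ M.δ, tr.2.2.2 ∈ wordBall X C)
    (hlang : M.lang = wordProblemF2) {t : ℕ → ℕ}
    (htime : ∀ w ∈ wordProblemF2, M.AcceptsIn w (t w.length)) (n : ℕ) :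
    2 ^ n ≤ Nat.card M.Q * growthFn X (C * t (2 * n)) := by
  have hsplit : ∀ u : Fin n → Fin 2, ∃ c : M.Q × wordBall X (C * t (2 * n)),
      (∃ i, ∀ v', M.StepsIn i (M.q0, 1, (List.ofFn u).map (·, false) ++ v') (c.1, c.2, v')) ∧
      ∃ j, ∃ q ∈ M.acc, M.StepsIn j (c.1, c.2, ((List.ofFn u).map (·, true)).reverse)
        (q, 1, []) := by
    intro u
    obtain ⟨k, hk, q, hq, hsteps⟩ := htime _ ((append_mem_wordProblemF2_iff (List.ofFn u) _).2 rfl)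
    obtain ⟨p, m, hm, ⟨i, hi⟩, j, hj⟩ := hsteps.exists_split hC
    rw [one_mul] at hj
    simp only [one_mul] at hi
    have hkn : k ≤ t (2 * n) := by simpa [two_mul] using hk
    exact ⟨(p, ⟨m, wordBall_mono (Nat.mul_le_mul_left C hkn) hm⟩), ⟨i, hi⟩, j, q, hq, hj⟩
  choose c hfst hsnd using hsplit
  have hinj : Function.Injective c := by
    intro u v huv
    obtain ⟨i, hi⟩ := hfst u
    obtain ⟨j, q, hq, hj⟩ := hsnd v
    rw [← huv] at hj
    have hmem : (List.ofFn u).map (·, false) ++ ((List.ofFn v).map (·, true)).reverse ∈ M.lang :=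
      ⟨i + j, i + j, le_rfl, q, hq, (hi _).trans hj⟩
    rw [hlang, append_mem_wordProblemF2_iff] at hmem
    exact List.ofFn_injective hmem
  have := M.finQ
  have := (finite_wordBall (X := X) (C * t (2 * n))).to_subtype
  have hcard := Nat.card_le_card_of_injective c hinj
  rw [Nat.card_prod] at hcard
  rw [Nat.card_fun, Nat.card_fin, Nat.card_fin] at hcard
  exact hcard

/-- If `G` is finitely generated with polynomially bounded growth, then
for every polynomial `t` there is a context-free language — namely `W(F₂)` — that is not
recognized by any weakly `t(n)` time-bounded `G`-automaton; hence `CF ⊄ 𝔏(G)ʷ_{t(n)}`. -/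
theorem cf_not_subset_poly_growth_polytime
    {G : Type*} [Group G] (X : Finset G) (hX : Subgroup.closure (X : Set G) = ⊤)
    (hpoly : ∃ p : Polynomial ℕ, ∀ n, growthFn X n ≤ p.eval n)
    (t : Polynomial ℕ) :
    wordProblemF2.IsContextFree ∧
    ¬ GRecognizableInTime G wordProblemF2 (fun n => t.eval n) := by
  refine ⟨wordProblemF2_isContextFree, ?_⟩
  rintro ⟨M, hlang, htime⟩
  obtain ⟨p, hp⟩ := hpoly
  obtain ⟨C, hC⟩ := exists_subset_wordBall hX (M.finδ.image fun tr => tr.2.2.2)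
  obtain ⟨n, hn⟩ := exists_eval_lt_two_pow
    (Polynomial.C (Nat.card M.Q) *
      p.comp (Polynomial.C C * t.comp (Polynomial.C 2 * Polynomial.X)))
  refine absurd hn (not_lt.2 ?_)
  have hle := two_pow_le_card_mul_growthFn (fun tr htr => hC ⟨tr, htr, rfl⟩) hlang
    (t := fun n => t.eval n) htime n
  simpa using hle.trans (Nat.mul_le_mul_left _ (hp _))
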